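/- Let A ∈ ℂ^{n×n} be Hermitian positive definite with orthonormal eigenvectors w_1,…,w_n and corresponding eigenvalues λ_1 ≤ λ_2 ≤ … ≤ λ_n, and let 1 ≤ j ≤ k ≤ n. Let b = Σ_{i=j}^{k} c_i w_i with ‖b‖ = 1 (i.e., b has no contribution from eigenvectors with index outside {j,…,k}), let f be a Stieltjes function, and let m ≥ 1. Let V_m ∈ ℂ^{n×m} have orthonormal columns whose column space equals K_m(A,b), and let f_m := V_m f(V_m* A V_m) V_m* b. Then for every x ∈ K_m(A,b), ‖f(A)b − f_m‖ ≤ (1 + (λ_k/λ_j)²) ‖f(A)b − x‖. -/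

import Mathlib

open MeasureTheory Matrix ComplexOrder

/-- A Stieltjes function: `f z = ∫ 1/(z+t) dμ(t)` for `z > 0`, for a positive Borel
measure `μ` on `[0,∞)` with `∫ 1/(1+t) dμ(t) < ∞`. -/
def IsStieltjes (f : ℝ → ℝ) : Prop :=
  ∃ μ : Measure ℝ,
    MeasureTheory.IntegrableOn (fun t => (1 + t)⁻¹) (Set.Ici 0) μ ∧
    ∀ z : ℝ, 0 < z → f z = ∫ t in Set.Ici (0 : ℝ), (z + t)⁻¹ ∂μ

/-- The Krylov subspace `K_m(A,b) = span{b, Ab, …, A^{m-1} b}`. -/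
noncomputable def Krylov {n : ℕ} (A : Matrix (Fin n) (Fin n) ℂ)
    (b : EuclideanSpace ℂ (Fin n)) (m : ℕ) : Submodule ℂ (EuclideanSpace ℂ (Fin n)) :=
  Submodule.span ℂ {v | ∃ i < m, v = Matrix.toEuclideanLin (A ^ i) b}

section HermitianFunctionalCalculus

variable {ι : Type*} [Fintype ι] [DecidableEq ι] {H : Matrix ι ι ℂ} (hH : H.IsHermitian)

theorem toEuclideanLin_mul_apply {l p q : Type*} [Fintype p] [DecidableEq p] [Fintype q]
    [DecidableEq q] (M : Matrix l p ℂ) (N : Matrix p q ℂ) (v : EuclideanSpace ℂ q) :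
    toEuclideanLin (M * N) v = toEuclideanLin M (toEuclideanLin N v) := by
  simp [toLpLin_apply]

theorem toEuclideanLin_eigenvectorBasis (i : ι) :
    toEuclideanLin H (hH.eigenvectorBasis i) =
      (hH.eigenvalues i : ℂ) • hH.eigenvectorBasis i := by
  have h := hH.mulVec_eigenvectorBasis i
  ext a
  simpa [toLpLin_apply] using congrFun h a

theorem toEuclideanLin_cfc_eigenvectorBasis (g : ℝ → ℝ) (i : ι) :
    toEuclideanLin (hH.cfc g) (hH.eigenvectorBasis i) =
      (g (hH.eigenvalues i) : ℂ) • hH.eigenvectorBasis i := by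
  have h : hH.cfc g *ᵥ (hH.eigenvectorBasis i).ofLp
      = (g (hH.eigenvalues i) : ℂ) • (hH.eigenvectorBasis i).ofLp := by
    rw [IsHermitian.cfc, Unitary.conjStarAlgAut_apply, ← mulVec_mulVec, ← mulVec_mulVec]
    have h1 := hH.star_eigenvectorUnitary_mulVec i
    rw [h1, diagonal_mulVec_single, ← hH.eigenvectorUnitary_mulVec, ← mulVec_smul]
    congr 1
    ext a
    simp [Pi.single_apply]
  ext a
  simpa [toLpLin_apply] using congrFun h a

theorem toEuclideanLin_cfc_apply (g : ℝ → ℝ) (v : EuclideanSpace ℂ ι) :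
    toEuclideanLin (hH.cfc g) v =
      ∑ i, (g (hH.eigenvalues i) : ℂ) •
        (inner ℂ (hH.eigenvectorBasis i) v • hH.eigenvectorBasis i) := by
  conv_lhs => rw [← hH.eigenvectorBasis.sum_repr' v]
  rw [map_sum]
  refine Finset.sum_congr rfl fun i _ => ?_
  rw [map_smul, toEuclideanLin_cfc_eigenvectorBasis, smul_comm]

/-- The functional calculus at `z ↦ (z + t)⁻¹` is the resolvent at `-t`. -/
theorem toEuclideanLin_cfc_resolvent (t : ℝ) (ht : ∀ i, hH.eigenvalues i + t ≠ 0)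
    (v : EuclideanSpace ℂ ι) :
    toEuclideanLin H (toEuclideanLin (hH.cfc fun z => (z + t)⁻¹) v) +
      (t : ℂ) • toEuclideanLin (hH.cfc fun z => (z + t)⁻¹) v = v := by
  conv_rhs => rw [← hH.eigenvectorBasis.sum_repr' v]
  rw [toEuclideanLin_cfc_apply, map_sum, Finset.smul_sum, ← Finset.sum_add_distrib]
  refine Finset.sum_congr rfl fun i _ => ?_
  have h : ((hH.eigenvalues i : ℂ) + t) ≠ 0 := by exact_mod_cast ht i
  rw [map_smul, map_smul, toEuclideanLin_eigenvectorBasis]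
  simp only [smul_smul, ← add_smul]
  congr 1
  push_cast
  field_simp

theorem integrableOn_inv_add {μ : Measure ℝ}
    (hμ : IntegrableOn (fun t => (1 + t)⁻¹) (Set.Ici 0) μ) {z : ℝ} (hz : 0 < z) :
    IntegrableOn (fun t => (z + t)⁻¹) (Set.Ici 0) μ := by
  refine Integrable.mono' (hμ.const_mul (1 + z⁻¹)) (by fun_prop) ?_
  refine (ae_restrict_iff' measurableSet_Ici).2 (Filter.Eventually.of_forall fun t ht => ?_)
  have ht : 0 ≤ t := ht
  rw [Real.norm_of_nonneg (by positivity)]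
  have : 0 < z + t := by positivity
  have : 0 < 1 + t := by positivity
  field_simp
  nlinarith [mul_pos hz hz]

theorem integrableOn_cfc_resolvent (hpos : ∀ i, 0 < hH.eigenvalues i) {μ : Measure ℝ}
    (hμ : IntegrableOn (fun t => (1 + t)⁻¹) (Set.Ici 0) μ) (v : EuclideanSpace ℂ ι) :
    IntegrableOn (fun t => toEuclideanLin (hH.cfc fun z => (z + t)⁻¹) v) (Set.Ici 0) μ := by
  simp only [toEuclideanLin_cfc_apply]
  exact integrable_finsetSum _ fun i _ =>
    ((integrableOn_inv_add hμ (hpos i)).ofReal (𝕜 := ℂ)).smul_const _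

theorem toEuclideanLin_cfc_eq_integral (hpos : ∀ i, 0 < hH.eigenvalues i) {μ : Measure ℝ}
    (hμ : IntegrableOn (fun t => (1 + t)⁻¹) (Set.Ici 0) μ) {f : ℝ → ℝ}
    (hf : ∀ z : ℝ, 0 < z → f z = ∫ t in Set.Ici (0 : ℝ), (z + t)⁻¹ ∂μ)
    (v : EuclideanSpace ℂ ι) :
    toEuclideanLin (hH.cfc f) v =
      ∫ t in Set.Ici (0 : ℝ), toEuclideanLin (hH.cfc fun z => (z + t)⁻¹) v ∂μ := by
  simp only [toEuclideanLin_cfc_apply]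
  rw [integral_finsetSum]
  · refine Finset.sum_congr rfl fun i _ => ?_
    rw [integral_smul_const, integral_complex_ofReal, hf _ (hpos i)]
  · exact fun i _ => ((integrableOn_inv_add hμ (hpos i)).ofReal (𝕜 := ℂ)).smul_const _

end HermitianFunctionalCalculus

section Krylov

variable {n m : ℕ} {A : Matrix (Fin n) (Fin n) ℂ} {b : EuclideanSpace ℂ (Fin n)}
  {V : Matrix (Fin n) (Fin m) ℂ}

open Polynomial

theorem aeval_apply_eq_sum {ι : Type*} [Fintype ι] [DecidableEq ι] (M : Matrix ι ι ℂ)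
    (p : ℂ[X]) (v : EuclideanSpace ℂ ι) :
    toEuclideanLin (aeval M p) v =
      ∑ i ∈ Finset.range (p.natDegree + 1), p.coeff i • toEuclideanLin (M ^ i) v := by
  rw [aeval_eq_sum_range, map_sum, LinearMap.sum_apply]
  simp only [map_smul, LinearMap.smul_apply]

theorem aeval_apply_mem_Krylov {p : ℂ[X]} (hp : p.natDegree < m) :
    toEuclideanLin (aeval A p) b ∈ Krylov A b m := by
  rw [aeval_apply_eq_sum]
  refine Submodule.sum_mem _ fun i hi => Submodule.smul_mem _ _ (Submodule.subset_span ⟨i, ?_, rfl⟩)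
  have := Finset.mem_range.1 hi
  omega

theorem aeval_apply_eigenvector {w : EuclideanSpace ℂ (Fin n)} {l : ℂ}
    (h : toEuclideanLin A w = l • w) (p : ℂ[X]) :
    toEuclideanLin (aeval A p) w = p.eval l • w := by
  have hpow : ∀ i : ℕ, toEuclideanLin (A ^ i) w = l ^ i • w := by
    intro i
    induction i with
    | zero => simp
    | succ i ih => rw [pow_succ, toEuclideanLin_mul_apply, h, map_smul, ih, smul_smul, pow_succ']
  rw [aeval_apply_eq_sum, eval_eq_sum_range, Finset.sum_smul]
  simp only [hpow, smul_smul]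

theorem proj_of_mem_Krylov (hVorth : Vᴴ * V = 1)
    (hVspan : LinearMap.range (toEuclideanLin V) = Krylov A b m)
    {y : EuclideanSpace ℂ (Fin n)} (hy : y ∈ Krylov A b m) :
    toEuclideanLin V (toEuclideanLin Vᴴ y) = y := by
  rw [← hVspan] at hy
  obtain ⟨z, rfl⟩ := hy
  rw [← toEuclideanLin_mul_apply Vᴴ V, hVorth]
  simp

theorem compression_pow_apply (hVorth : Vᴴ * V = 1)
    (hVspan : LinearMap.range (toEuclideanLin V) = Krylov A b m) {i : ℕ} (hi : i ≤ m) :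
    toEuclideanLin Vᴴ (toEuclideanLin (A ^ i) b) =
      toEuclideanLin ((Vᴴ * A * V) ^ i) (toEuclideanLin Vᴴ b) := by
  induction i with
  | zero => simp
  | succ i ih =>
    have hmem : toEuclideanLin (A ^ i) b ∈ Krylov A b m :=
      Submodule.subset_span ⟨i, by omega, rfl⟩
    rw [pow_succ' (Vᴴ * A * V), toEuclideanLin_mul_apply, ← ih (by omega),
      toEuclideanLin_mul_apply, proj_of_mem_Krylov hVorth hVspan hmem,
      toEuclideanLin_mul_apply, pow_succ', toEuclideanLin_mul_apply]

/-- The characteristic polynomial of the compression `Vᴴ * A * V`, evaluated at `A` and applied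
to `b`, is orthogonal to the Krylov space. -/
theorem conjTranspose_charpoly_apply (hVorth : Vᴴ * V = 1)
    (hVspan : LinearMap.range (toEuclideanLin V) = Krylov A b m) :
    toEuclideanLin Vᴴ (toEuclideanLin (aeval A (Vᴴ * A * V).charpoly) b) = 0 := by
  have hdeg : (Vᴴ * A * V).charpoly.natDegree = m := by simp [charpoly_natDegree_eq_dim]
  have h : toEuclideanLin Vᴴ (toEuclideanLin (aeval A (Vᴴ * A * V).charpoly) b) =
      toEuclideanLin (aeval (Vᴴ * A * V) (Vᴴ * A * V).charpoly) (toEuclideanLin Vᴴ b) := by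
    rw [aeval_apply_eq_sum, aeval_apply_eq_sum, map_sum]
    refine Finset.sum_congr rfl fun i hi => ?_
    rw [map_smul, compression_pow_apply hVorth hVspan]
    have := Finset.mem_range.1 hi
    omega
  rw [h, aeval_self_charpoly]
  simp

/-- The residuals of the Galerkin approximations of the shifted systems `(A + t) x = b` are all
collinear with `χ(A) b`, where `χ` is the characteristic polynomial of the compression. -/
theorem charpoly_smul_residual (hm : 1 ≤ m) (hVorth : Vᴴ * V = 1)
    (hVspan : LinearMap.range (toEuclideanLin V) = Krylov A b m) (t : ℂ)
    (hinj : ∀ v, toEuclideanLin (Vᴴ * A * V) v + t • v = 0 → v = 0)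
    {z : EuclideanSpace ℂ (Fin m)}
    (hz : toEuclideanLin (Vᴴ * A * V) z + t • z = toEuclideanLin Vᴴ b) :
    (Vᴴ * A * V).charpoly.eval (-t) •
        (b - (toEuclideanLin A (toEuclideanLin V z) + t • toEuclideanLin V z)) =
      toEuclideanLin (aeval A (Vᴴ * A * V).charpoly) b := by
  have horth := conjTranspose_charpoly_apply hVorth hVspan
  obtain ⟨T, hT⟩ : ∃ T, T = Vᴴ * A * V := ⟨_, rfl⟩
  rw [← hT] at horth hinj hz ⊢
  obtain ⟨q, hq⟩ : ∃ q, q = T.charpoly /ₘ (X - C (-t)) := ⟨_, rfl⟩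
  have hqdeg : q.natDegree < m := by
    rw [hq, natDegree_divByMonic _ (monic_X_sub_C _), charpoly_natDegree_eq_dim,
      natDegree_X_sub_C, Fintype.card_fin]
    omega
  have hdecomp : T.charpoly = C (T.charpoly.eval (-t)) + (X + C t) * q := by
    have h := modByMonic_add_div T.charpoly (X - C (-t))
    rw [modByMonic_X_sub_C_eq_C_eval, ← hq, C_neg, sub_neg_eq_add] at h
    exact h.symm
  have hmem := aeval_apply_mem_Krylov (A := A) (b := b) hqdeg
  obtain ⟨y, hy⟩ : ∃ y, y = toEuclideanLin (aeval A q) b := ⟨_, rfl⟩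
  rw [← hy] at hmem
  have hu : toEuclideanLin (aeval A T.charpoly) b =
      T.charpoly.eval (-t) • b + (toEuclideanLin A y + t • y) := by
    conv_lhs => rw [hdecomp]
    rw [map_add, map_mul, map_add, LinearMap.add_apply, toEuclideanLin_mul_apply]
    simp [hy, Algebra.algebraMap_eq_smul_one]
  have hproj := proj_of_mem_Krylov hVorth hVspan hmem
  have hcoord : toEuclideanLin Vᴴ y = -(T.charpoly.eval (-t) • z) := by
    rw [← sub_eq_zero, sub_neg_eq_add]
    apply hinj
    rw [hu, map_add, map_add, map_smul, map_smul, ← hz] at horth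
    have hTy : toEuclideanLin T (toEuclideanLin Vᴴ y) = toEuclideanLin Vᴴ (toEuclideanLin A y) := by
      rw [hT, toEuclideanLin_mul_apply, hproj, toEuclideanLin_mul_apply]
    rw [← horth, map_add, map_smul, hTy]
    module
  rw [hu, ← hproj, hcoord]
  simp only [map_neg, map_smul]
  module

end Krylov

/-- If `e` is obtained from `u` by multiplying its coordinates by factors in `[α, β]`, then
the angle between `e` and `u` is controlled by `β / α`. -/
theorem mul_norm_mul_norm_le_mul_re_inner {ι E : Type*} [Fintype ι] [NormedAddCommGroup E]
    [InnerProductSpace ℂ E] (W : OrthonormalBasis ι ℂ E) {u e : E} {ρ : ι → ℝ}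
    {α β : ℝ} (hα : 0 ≤ α) (hαβ : α ≤ β)
    (he : ∀ i, inner ℂ (W i) e = (ρ i : ℂ) * inner ℂ (W i) u)
    (hρ : ∀ i, inner ℂ (W i) u = 0 ∨ (α ≤ ρ i ∧ ρ i ≤ β)) :
    α * (‖e‖ * ‖u‖) ≤ β * (inner ℂ u e).re := by
  have hβ : 0 ≤ β := hα.trans hαβ
  have hnorm : ‖e‖ ≤ β * ‖u‖ := by
    refine (sq_le_sq₀ (norm_nonneg e) (by positivity)).1 ?_
    rw [mul_pow, ← W.sum_sq_norm_inner_right e, ← W.sum_sq_norm_inner_right u, Finset.mul_sum]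
    refine Finset.sum_le_sum fun i _ => ?_
    rw [he, norm_mul, mul_pow]
    rcases hρ i with h | ⟨h1, h2⟩
    · simp [h]
    · rw [Complex.norm_real, Real.norm_of_nonneg (hα.trans h1)]
      have := hα.trans h1
      gcongr
  have hinner : α * ‖u‖ ^ 2 ≤ (inner ℂ u e).re := by
    rw [← W.sum_inner_mul_inner u e, Complex.re_sum, ← W.sum_sq_norm_inner_right u, Finset.mul_sum]
    refine Finset.sum_le_sum fun i _ => ?_
    have h : inner ℂ u (W i) * inner ℂ (W i) e = ((ρ i * ‖inner ℂ (W i) u‖ ^ 2 : ℝ) : ℂ) := by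
      rw [he, ← inner_conj_symm u (W i), mul_left_comm, ← Complex.normSq_eq_conj_mul_self,
        Complex.normSq_eq_norm_sq]
      push_cast
      rfl
    rw [h, Complex.ofReal_re]
    rcases hρ i with h | ⟨h1, h2⟩
    · simp [h]
    · gcongr
  calc α * (‖e‖ * ‖u‖) ≤ α * (β * ‖u‖ * ‖u‖) := by gcongr
    _ = β * (α * ‖u‖ ^ 2) := by ring
    _ ≤ β * (inner ℂ u e).re := by gcongr

theorem norm_mul_norm_integral_le_mul_re_inner {E : Type*} [NormedAddCommGroup E]
    [InnerProductSpace ℂ E] [CompleteSpace E] {X : Type*} [MeasurableSpace X] {ν : Measure X}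
    {e : X → E} (hint : Integrable e ν) {u : E} {κ : ℝ}
    (h : ∀ᵐ t ∂ν, ‖e t‖ * ‖u‖ ≤ κ * (inner ℂ u (e t)).re) :
    ‖∫ t, e t ∂ν‖ * ‖u‖ ≤ κ * (inner ℂ u (∫ t, e t ∂ν)).re := by
  have hre : (inner ℂ u (∫ t, e t ∂ν)).re = ∫ t, (inner ℂ u (e t)).re ∂ν := by
    rw [← integral_inner hint u]
    exact (integral_re (hint.const_inner (𝕜 := ℂ) u)).symm
  calc ‖∫ t, e t ∂ν‖ * ‖u‖ ≤ (∫ t, ‖e t‖ ∂ν) * ‖u‖ := by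
        gcongr; exact norm_integral_le_integral_norm _
    _ = ∫ t, ‖e t‖ * ‖u‖ ∂ν := (integral_mul_const _ _).symm
    _ ≤ ∫ t, κ * (inner ℂ u (e t)).re ∂ν :=
        integral_mono_ae (hint.norm.mul_const _) ((hint.const_inner (𝕜 := ℂ) u).re.const_mul κ) h
    _ = κ * (inner ℂ u (∫ t, e t ∂ν)).re := by rw [integral_const_mul, hre]

theorem inner_toEuclideanLin_conjTranspose {p q : Type*} [Fintype p] [DecidableEq p] [Fintype q]
    [DecidableEq q] (M : Matrix p q ℂ) (u : EuclideanSpace ℂ p) (z : EuclideanSpace ℂ q) :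
    inner ℂ u (toEuclideanLin M z) = inner ℂ (toEuclideanLin Mᴴ u) z := by
  rw [toEuclideanLin_conjTranspose_eq_adjoint, LinearMap.adjoint_inner_left]

theorem eigenvalue_pos_of_posDef {n : ℕ} {A : Matrix (Fin n) (Fin n) ℂ} (hA : A.PosDef)
    {v : EuclideanSpace ℂ (Fin n)} (hv : v ≠ 0) {l : ℝ}
    (h : toEuclideanLin A v = (l : ℂ) • v) : 0 < l := by
  have hv' : v.ofLp ≠ 0 := fun h0 => hv (by ext i; simpa using congrFun h0 i)
  have hpos := hA.re_dotProduct_pos hv'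
  have hmul : A *ᵥ v.ofLp = (l : ℂ) • v.ofLp := congrArg WithLp.ofLp h
  have hself : star v.ofLp ⬝ᵥ v.ofLp = ((‖v‖ ^ 2 : ℝ) : ℂ) := by
    have := inner_self_eq_norm_sq_to_K (𝕜 := ℂ) v
    rw [EuclideanSpace.inner_eq_star_dotProduct, dotProduct_comm] at this
    simpa using this
  rw [hmul, dotProduct_smul, hself] at hpos
  simp only [smul_eq_mul, RCLike.re_to_complex, ← Complex.ofReal_mul, Complex.ofReal_re] at hpos
  exact pos_of_mul_pos_left hpos (by positivity)

/-- The characteristic polynomial at `-t` is, up to the sign `(-1) ^ m`, a positive number. -/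
theorem exists_pos_charpoly_eval_neg {m : ℕ} {T : Matrix (Fin m) (Fin m) ℂ} (hT : T.IsHermitian)
    {t : ℝ} (ht : ∀ i, 0 < hT.eigenvalues i + t) :
    ∃ d : ℝ, 0 < d ∧ T.charpoly.eval (-(t : ℂ)) = (-1) ^ m * d := by
  refine ⟨∏ i, (hT.eigenvalues i + t), Finset.prod_pos fun i _ => ht i, ?_⟩
  rw [hT.charpoly_eq, Polynomial.eval_prod]
  have : ∀ i, ((Polynomial.X - Polynomial.C (hT.eigenvalues i : ℂ)).eval (-(t : ℂ))) =
      (-1) * ((hT.eigenvalues i + t : ℝ) : ℂ) := by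
    intro i
    simp only [Polynomial.eval_sub, Polynomial.eval_X, Polynomial.eval_C]
    push_cast
    ring
  simp only [Complex.coe_algebraMap, this, Finset.prod_mul_distrib]
  simp

/-- **Remark 3.6 (effective condition number)**: if `b` only has contributions from the
eigenvectors `w_j, …, w_k` of the Hermitian positive definite matrix `A` (eigenvalues
ordered increasingly), then the Lanczos approximation `f_m = V f(V* A V) V* b` for a
Stieltjes function `f` satisfies
`‖f(A)b − f_m‖ ≤ (1 + (λ_k/λ_j)²) ‖f(A)b − x‖` for every `x ∈ K_m(A,b)`. -/
theorem lanczos_near_instance_optimality_effective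
    {n m : ℕ} (hm : 1 ≤ m)
    (A : Matrix (Fin n) (Fin n) ℂ) (hA : A.IsHermitian) (hApd : A.PosDef)
    -- orthonormal eigenvectors `w i` with eigenvalues `lam i`, ordered increasingly
    (lam : Fin n → ℝ) (w : Fin n → EuclideanSpace ℂ (Fin n))
    (hw : Orthonormal ℂ w)
    (heig : ∀ i, Matrix.toEuclideanLin A (w i) = (lam i : ℂ) • w i)
    (hmono : Monotone lam)
    (j k : Fin n) (hjk : j ≤ k)
    -- `b = ∑_{i=j}^{k} c_i w_i` with `‖b‖ = 1`
    (c : Fin n → ℂ) (hc : ∀ i, (i < j ∨ k < i) → c i = 0)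
    (b : EuclideanSpace ℂ (Fin n)) (hbdef : b = ∑ i, c i • w i) (hb : ‖b‖ = 1)
    (f : ℝ → ℝ) (hf : IsStieltjes f)
    (V : Matrix (Fin n) (Fin m) ℂ)
    (hVorth : Vᴴ * V = 1)
    (hVspan : LinearMap.range (Matrix.toEuclideanLin V) = Krylov A b m)
    (fm : EuclideanSpace ℂ (Fin n))
    (hfm : fm = Matrix.toEuclideanLin V
      (Matrix.toEuclideanLin ((Matrix.isHermitian_conjTranspose_mul_mul V hA).cfc f)
        (Matrix.toEuclideanLin Vᴴ b)))
    (x : EuclideanSpace ℂ (Fin n)) (hx : x ∈ Krylov A b m) :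
    ‖Matrix.toEuclideanLin (hA.cfc f) b - fm‖ ≤
      (1 + (lam k / lam j) ^ 2) * ‖Matrix.toEuclideanLin (hA.cfc f) b - x‖ := by
  obtain ⟨μ, hμ, hfμ⟩ := hf
  let W : OrthonormalBasis (Fin n) ℂ (EuclideanSpace ℂ (Fin n)) :=
    OrthonormalBasis.mk hw (by
      rw [hw.linearIndependent.span_eq_top_of_card_eq_finrank' (by simp)])
  have hW : ∀ i, W i = w i := fun i => by simp [W]
  have hlam : ∀ i, 0 < lam i := fun i => eigenvalue_pos_of_posDef hApd (hw.ne_zero i) (heig i)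
  have hV : Function.Injective V.mulVec := fun y z hyz => by
    simpa [hVorth] using congrArg (Vᴴ.mulVec) hyz
  have hT := Matrix.isHermitian_conjTranspose_mul_mul V hA
  have hTpos : ∀ i, 0 < hT.eigenvalues i := (hApd.conjTranspose_mul_mul_same hV).eigenvalues_pos
  have hApos : ∀ i, 0 < hA.eigenvalues i := hApd.eigenvalues_pos
  obtain ⟨u, hu⟩ : ∃ u, u = (-1 : ℂ) ^ m • toEuclideanLin
    (Polynomial.aeval A (Vᴴ * A * V).charpoly) b := ⟨_, rfl⟩
  have huV : ∀ y ∈ Krylov A b m, inner ℂ u y = 0 := fun y hy => by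
    rw [← hVspan] at hy
    obtain ⟨z, rfl⟩ := hy
    rw [inner_toEuclideanLin_conjTranspose, hu, map_smul,
      conjTranspose_charpoly_apply hVorth hVspan, smul_zero, inner_zero_left]
  have hucoord : ∀ i, (i < j ∨ k < i) → inner ℂ (W i) u = 0 := fun i hi => by
    have hsum : toEuclideanLin (Polynomial.aeval A (Vᴴ * A * V).charpoly) b =
        ∑ a, (c a * (Vᴴ * A * V).charpoly.eval (lam a : ℂ)) • w a := by
      rw [hbdef, map_sum]
      refine Finset.sum_congr rfl fun a _ => ?_
      rw [map_smul, aeval_apply_eigenvector (heig a), smul_smul]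
    rw [hu, inner_smul_right, hsum, hW, hw.inner_right_fintype, hc i hi, zero_mul, mul_zero]
  -- the error of the Galerkin approximation of the shifted linear system
  let e : ℝ → EuclideanSpace ℂ (Fin n) := fun t =>
    toEuclideanLin (hA.cfc fun z => (z + t)⁻¹) b -
      toEuclideanLin V (toEuclideanLin (hT.cfc fun z => (z + t)⁻¹) (toEuclideanLin Vᴴ b))
  have hTint := integrableOn_cfc_resolvent hT hTpos hμ (toEuclideanLin Vᴴ b)
  have hVint : IntegrableOn (fun t => toEuclideanLin V
      (toEuclideanLin (hT.cfc fun z => (z + t)⁻¹) (toEuclideanLin Vᴴ b))) (Set.Ici 0) μ :=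
    (LinearMap.toContinuousLinearMap (toEuclideanLin V)).integrable_comp hTint
  have hAint := integrableOn_cfc_resolvent hA hApos hμ b
  have heint : IntegrableOn e (Set.Ici 0) μ := hAint.sub hVint
  have hE : toEuclideanLin (hA.cfc f) b - fm = ∫ t in Set.Ici (0 : ℝ), e t ∂μ := by
    rw [integral_sub hAint hVint, ← toEuclideanLin_cfc_eq_integral hA hApos hμ hfμ, hfm,
      toEuclideanLin_cfc_eq_integral hT hTpos hμ hfμ]
    congr 1
    exact ((LinearMap.toContinuousLinearMap (toEuclideanLin V)).integral_comp_comm hTint).symm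
  have hcoord : ∀ t : ℝ, 0 ≤ t → ∃ d : ℝ, 0 < d ∧
      ∀ i, inner ℂ (W i) (e t) = (((d * (lam i + t))⁻¹ : ℝ) : ℂ) * inner ℂ (W i) u := by
    intro t ht
    obtain ⟨d, hd, hdeval⟩ := exists_pos_charpoly_eval_neg hT
      (fun i => add_pos_of_pos_of_nonneg (hTpos i) ht)
    refine ⟨d, hd, fun i => ?_⟩
    have hresA := toEuclideanLin_cfc_resolvent hA t
      (fun i => (add_pos_of_pos_of_nonneg (hApos i) ht).ne') b
    have hresT := toEuclideanLin_cfc_resolvent hT t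
      (fun i => (add_pos_of_pos_of_nonneg (hTpos i) ht).ne') (toEuclideanLin Vᴴ b)
    have hinj : ∀ v, toEuclideanLin (Vᴴ * A * V) v + (t : ℂ) • v = 0 → v = 0 := by
      intro v hv
      by_contra hv0
      have hv' : toEuclideanLin (Vᴴ * A * V) v = ((-t : ℝ) : ℂ) • v := by
        rw [eq_neg_of_add_eq_zero_left hv]
        simp
      have := eigenvalue_pos_of_posDef (hApd.conjTranspose_mul_mul_same hV) hv0 hv'
      linarith
    have hcol := charpoly_smul_residual hm hVorth hVspan (t : ℂ) hinj hresT
    obtain ⟨y, hy⟩ : ∃ y, y = toEuclideanLin V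
      (toEuclideanLin (hT.cfc fun z => (z + t)⁻¹) (toEuclideanLin Vᴴ b)) := ⟨_, rfl⟩
    rw [← hy] at hcol
    have hres : toEuclideanLin A (e t) + (t : ℂ) • e t =
        b - (toEuclideanLin A y + (t : ℂ) • y) := by
      simp only [e, ← hy, map_sub]
      rw [eq_sub_iff_add_eq]
      refine Eq.trans ?_ hresA
      module
    have heq : (d : ℂ) • (toEuclideanLin A (e t) + (t : ℂ) • e t) = u := by
      rw [hu, ← hcol, hres, hdeval, smul_smul, ← mul_assoc, ← mul_pow]
      simp
    have hsym : inner ℂ (W i) (toEuclideanLin A (e t)) = (lam i : ℂ) * inner ℂ (W i) (e t) := by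
      rw [inner_toEuclideanLin_conjTranspose, hA.eq, hW, heig, inner_smul_left, Complex.conj_ofReal]
    rw [← heq, inner_smul_right, inner_add_right, hsym, inner_smul_right]
    have h1 : (d : ℂ) ≠ 0 := by exact_mod_cast hd.ne'
    have h2 : (lam i : ℂ) + t ≠ 0 := by
      exact_mod_cast (add_pos_of_pos_of_nonneg (hlam i) ht).ne'
    push_cast
    field_simp
  have hκ : 1 ≤ lam k / lam j := (one_le_div (hlam j)).2 (hmono hjk)
  have hangle : ∀ t : ℝ, 0 ≤ t → ‖e t‖ * ‖u‖ ≤ lam k / lam j * (inner ℂ u (e t)).re := by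
    intro t ht
    obtain ⟨d, hd, hcoord⟩ := hcoord t ht
    have hj : 0 < lam j + t := add_pos_of_pos_of_nonneg (hlam j) ht
    have hk : 0 < lam k + t := add_pos_of_pos_of_nonneg (hlam k) ht
    have hjk' := hmono hjk
    have h := mul_norm_mul_norm_le_mul_re_inner W (α := (d * (lam k + t))⁻¹)
      (β := (d * (lam j + t))⁻¹) (by positivity) (by gcongr) hcoord fun i => by
        by_cases hi : i < j ∨ k < i
        · exact Or.inl (hucoord i hi)
        · push Not at hi
          have h1 := hmono hi.1
          have h2 := hmono hi.2
          have hi : 0 < lam i + t := add_pos_of_pos_of_nonneg (hlam i) ht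
          exact Or.inr ⟨by gcongr, by gcongr⟩
    have hre : 0 ≤ (inner ℂ u (e t)).re := by
      by_contra! hneg
      have : (d * (lam j + t))⁻¹ * (inner ℂ u (e t)).re < 0 :=
        mul_neg_of_pos_of_neg (by positivity) hneg
      have : 0 ≤ (d * (lam k + t))⁻¹ * (‖e t‖ * ‖u‖) := by positivity
      linarith
    have h' : ‖e t‖ * ‖u‖ ≤ (lam k + t) / (lam j + t) * (inner ℂ u (e t)).re := by
      have := mul_le_mul_of_nonneg_left h (by positivity : 0 ≤ d * (lam k + t))
      rw [mul_inv_cancel_left₀ (by positivity)] at this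
      refine this.trans_eq ?_
      field_simp
    refine h'.trans (mul_le_mul_of_nonneg_right ?_ hre)
    rw [div_le_div_iff₀ hj (hlam j)]
    nlinarith
  have hmain : ‖toEuclideanLin (hA.cfc f) b - fm‖ ≤
      lam k / lam j * ‖toEuclideanLin (hA.cfc f) b - x‖ := by
    rcases eq_or_ne u 0 with hu0 | hu0
    · have hzero : ∀ t ∈ Set.Ici (0 : ℝ), e t = 0 := fun t ht => by
        obtain ⟨d, -, hcoord⟩ := hcoord t ht
        refine W.repr.injective ?_
        ext i
        simp [W.repr_apply_apply, hcoord, hu0]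
      rw [hE, setIntegral_congr_fun measurableSet_Ici hzero]
      simp only [integral_zero, norm_zero]
      positivity
    · have hfmK : fm ∈ Krylov A b m := by
        rw [← hVspan, hfm]
        exact LinearMap.mem_range_self _ _
      have hint := norm_mul_norm_integral_le_mul_re_inner heint
        ((ae_restrict_iff' measurableSet_Ici).2 (Filter.Eventually.of_forall hangle))
      rw [← hE] at hint
      have hshift : inner ℂ u (toEuclideanLin (hA.cfc f) b - fm) =
          inner ℂ u (toEuclideanLin (hA.cfc f) b - x) := by
        rw [inner_sub_right, inner_sub_right, huV fm hfmK, huV x hx]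
      have hcs := (Complex.re_le_norm _).trans
        (norm_inner_le_norm (𝕜 := ℂ) u (toEuclideanLin (hA.cfc f) b - x))
      rw [hshift] at hint
      refine le_of_mul_le_mul_right ?_ (norm_pos_iff.2 hu0)
      calc _ ≤ _ := hint
        _ ≤ lam k / lam j * (‖u‖ * ‖toEuclideanLin (hA.cfc f) b - x‖) := by gcongr
        _ = _ := by ring
  refine hmain.trans (mul_le_mul_of_nonneg_right ?_ (norm_nonneg _))
  nlinarith
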